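/- Let p ≥ 2 and let G = K_p[G_1, …, G_p] be a completely joined graph, where G_1, …, G_p are arbitrary finite graphs each having at least one vertex. Let S be a set of m ≥ 2 vertices of G and let I(S) = {1 ≤ i ≤ p : S ∩ V(G_i) ≠ ∅}. Then the Steiner distance of S in G satisfies: d_G(S) ≤ m if |I(S)| = 1, and d_G(S) = m − 1 if |I(S)| > 1. -/

import Mathlib

open SimpleGraph

/-- The *Steiner distance* of a set `S` of vertices of `G`: the minimum number of edges
of a connected subgraph of `G` containing all vertices of `S`. -/
noncomputable def steinerDist {V : Type*} (G : SimpleGraph V) (S : Set V) : ℕ :=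
  sInf {n | ∃ T : G.Subgraph, T.Connected ∧ S ⊆ T.verts ∧ T.edgeSet.ncard = n}

/-- The *generalized composition* `H[G 1, …, G k]`: a vertex `u` of `G i` is adjacent to a
vertex `v` of `G j` iff either `i = j` and `u, v` are adjacent in `G i`, or `i ≠ j` and
`i, j` are adjacent in `H`.  A *completely joined graph* is `(⊤ : SimpleGraph (Fin p))[G 1, …, G p]`,
i.e. the generalized composition over the complete graph `K p`. -/
def genComp {k : ℕ} (H : SimpleGraph (Fin k)) {W : Fin k → Type*}
    (Gs : ∀ i, SimpleGraph (W i)) : SimpleGraph ((i : Fin k) × W i) :=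
  SimpleGraph.fromRel fun u v =>
    (∃ h : u.1 = v.1, (Gs v.1).Adj (h ▸ u.2) v.2) ∨ H.Adj u.1 v.1

/-!
A connected subgraph containing `S` has at least `|S|` vertices, hence at least `|S| - 1` edges,
and a spanning tree of a connected set `U ⊇ S` has `|U| - 1` edges. If `S` meets two parts of a
complete join, then `U = S` is connected, because two vertices of the same part have a common
neighbour in the other part. If `S` lies in one part, then adding any vertex `w` of another part
makes `U = S ∪ {w}` connected, because `w` is adjacent to all of `S`.
-/

section

variable {V ι : Type*} {G : SimpleGraph V} {S : Set V}

theorem ncard_edgeSet_eq_natCard_edgeSet_coe (T : G.Subgraph) :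
    T.edgeSet.ncard = Nat.card T.coe.edgeSet := by
  rw [← T.image_coe_edgeSet_coe,
    Set.ncard_image_of_injective _ (Sym2.map.injective Subtype.val_injective),
    Nat.card_coe_set_eq]

section Subgraph

variable {T : G.Subgraph}

theorem ncard_verts_le_ncard_edgeSet_add_one (hT : T.Connected) :
    T.verts.ncard ≤ T.edgeSet.ncard + 1 := by
  rw [ncard_edgeSet_eq_natCard_edgeSet_coe, ← Nat.card_coe_set_eq]
  exact hT.coe.card_vert_le_card_edgeSet_add_one

theorem exists_connected_ncard_edgeSet_add_one_eq (hT : T.Connected) (hfin : T.verts.Finite) :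
    ∃ F : G.Subgraph, F.Connected ∧ F.verts = T.verts ∧ F.edgeSet.ncard + 1 = T.verts.ncard := by
  have : Finite T.verts := hfin
  obtain ⟨F, hFT, hF⟩ := hT.coe.exists_isTree_le
  refine ⟨Subgraph.coeSubgraph (toSubgraph F hFT), (hF.connected.toSubgraph hFT).coeSubgraph,
    by simp, ?_⟩
  have edges : (toSubgraph F hFT).edgeSet = F.edgeSet := rfl
  rw [Subgraph.edgeSet_map, edges,
    Set.ncard_image_of_injective _ (Sym2.map.injective T.hom_injective),
    ← Nat.card_coe_set_eq, ← Nat.card_coe_set_eq]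
  exact (isTree_iff_connected_and_card.mp hF).2

theorem steinerDist_lt_ncard_verts (hT : T.Connected) (hfin : T.verts.Finite)
    (hST : S ⊆ T.verts) : steinerDist G S < T.verts.ncard := by
  obtain ⟨F, hF, hverts, hcard⟩ := exists_connected_ncard_edgeSet_add_one_eq hT hfin
  have : steinerDist G S ≤ F.edgeSet.ncard := Nat.sInf_le ⟨F, hF, hverts ▸ hST, rfl⟩
  lia

-- Junk values: `steinerDist G S` is `sInf ∅ = 0` if no connected subgraph contains `S`, and an
-- infinite edge set has `ncard` equal to `0`.
theorem ncard_le_steinerDist_add_one [Finite V] (hT : T.Connected) (hST : S ⊆ T.verts) :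
    S.ncard ≤ steinerDist G S + 1 := by
  obtain ⟨F, hF, hSF, hcard⟩ : steinerDist G S ∈
      {n | ∃ F : G.Subgraph, F.Connected ∧ S ⊆ F.verts ∧ F.edgeSet.ncard = n} :=
    Nat.sInf_mem ⟨_, T, hT, hST, rfl⟩
  calc
    S.ncard ≤ F.verts.ncard := Set.ncard_le_ncard hSF
    _ ≤ F.edgeSet.ncard + 1 := ncard_verts_le_ncard_edgeSet_add_one hF
    _ = steinerDist G S + 1 := by rw [hcard]

end Subgraph

theorem steinerDist_add_one_eq_ncard [Finite V] (hS : (G.induce S).Connected) :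
    steinerDist G S + 1 = S.ncard := by
  have hT := connected_induce_iff.mp hS
  exact le_antisymm (steinerDist_lt_ncard_verts hT S.toFinite subset_rfl)
    (ncard_le_steinerDist_add_one hT subset_rfl)

theorem steinerDist_le_ncard_of_forall_adj {w : V} (hfin : S.Finite) (hw : ∀ v ∈ S, G.Adj w v) :
    steinerDist G S ≤ S.ncard := by
  have hwS : w ∉ S := fun h => G.irrefl (hw w h)
  have hconn : (G.induce (insert w S)).Connected := by
    refine Connected.of_isUniversal (v := ⟨w, Set.mem_insert w S⟩) fun v hv => ?_
    exact hw v (v.2.resolve_left fun h => hv (Subtype.ext h.symm))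
  have hlt : steinerDist G S < (insert w S).ncard :=
    steinerDist_lt_ncard_verts (connected_induce_iff.mp hconn) (hfin.insert w)
      (Set.subset_insert w S)
  rwa [Set.ncard_insert_of_notMem hwS hfin, Nat.lt_succ_iff] at hlt

theorem connected_comap_top_of_ne {f : V → ι} {u v : V} (huv : f u ≠ f v) :
    ((⊤ : SimpleGraph ι).comap f).Connected := by
  have reachable_of_ne {a b : V} (hab : f a ≠ f b) :
      ((⊤ : SimpleGraph ι).comap f).Reachable a b :=
    Adj.reachable hab
  refine (connected_iff_exists_forall_reachable _).mpr ⟨u, fun w => ?_⟩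
  by_cases hw : f u = f w
  · exact (reachable_of_ne huv).trans (reachable_of_ne (hw ▸ huv.symm))
  · exact reachable_of_ne hw

-- `hG` says that `G` is a complete join whose parts are the fibres of `f`.
theorem steinerDist_completelyJoined_general [Finite V] {f : V → ι}
    (hG : (⊤ : SimpleGraph ι).comap f ≤ G) (hf : (Set.range f).Nontrivial) (S : Set V) :
    ((∃ i, ∀ v ∈ S, f v = i) → steinerDist G S ≤ S.ncard) ∧
      ((∃ u ∈ S, ∃ v ∈ S, f u ≠ f v) → steinerDist G S = S.ncard - 1) := by
  constructor
  · rintro ⟨i, hi⟩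
    obtain ⟨_, ⟨w, rfl⟩, hwi⟩ := hf.exists_ne i
    exact steinerDist_le_ncard_of_forall_adj S.toFinite fun v hv => hG (hi v hv ▸ hwi)
  · rintro ⟨u, hu, v, hv, huv⟩
    have hcomap : ((⊤ : SimpleGraph ι).comap fun x : S => f x).Connected :=
      connected_comap_top_of_ne (u := ⟨u, hu⟩) (v := ⟨v, hv⟩) huv
    have hS : (G.induce S).Connected := hcomap.mono fun _ _ hab => hG hab
    exact Nat.eq_sub_of_add_eq (steinerDist_add_one_eq_ncard hS)

theorem range_sigma_fst_nontrivial [Nontrivial ι] {W : ι → Type*} [∀ i, Nonempty (W i)] :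
    (Set.range (Sigma.fst : (i : ι) × W i → ι)).Nontrivial := by
  have surj : Function.Surjective (Sigma.fst : (i : ι) × W i → ι) :=
    fun i => ⟨⟨i, Classical.arbitrary (W i)⟩, rfl⟩
  exact surj.range_eq ▸ Set.nontrivial_univ

end

theorem comap_fst_le_genComp {k : ℕ} (H : SimpleGraph (Fin k)) {W : Fin k → Type*}
    (Gs : ∀ i, SimpleGraph (W i)) : H.comap Sigma.fst ≤ genComp H Gs := by
  intro u v (huv : H.Adj u.1 v.1)
  exact (fromRel_adj _ _ _).mpr ⟨fun h => huv.ne (congrArg Sigma.fst h), .inl (.inr huv)⟩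

/-- Let `p ≥ 2` and let `G = K_p[G 1, …, G p]` be a completely joined
graph, where the `G i` are arbitrary finite graphs each having at least one vertex.
Let `S` be a set of `m ≥ 2` vertices of `G` and let `I(S) = {i : S ∩ V(G i) ≠ ∅}`.
Then the Steiner distance of `S` in `G` is at most `m` if `|I(S)| = 1` (i.e. `S` lies in
a single factor), and equals `m − 1` if `|I(S)| > 1` (i.e. `S` meets two factors). -/
theorem steinerDist_completelyJoined {p : ℕ} (hp : 2 ≤ p)
    {W : Fin p → Type*} [∀ i, Fintype (W i)] [∀ i, Nonempty (W i)]
    (Gs : ∀ i, SimpleGraph (W i))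
    (S : Finset ((i : Fin p) × W i)) (m : ℕ) (hm : 2 ≤ m) (hcard : S.card = m) :
    ((∃ i, ∀ v ∈ S, v.1 = i) →
        steinerDist (genComp (⊤ : SimpleGraph (Fin p)) Gs) (S : Set ((i : Fin p) × W i)) ≤ m) ∧
      ((∃ u ∈ S, ∃ v ∈ S, u.1 ≠ v.1) →
        steinerDist (genComp (⊤ : SimpleGraph (Fin p)) Gs) (S : Set ((i : Fin p) × W i)) = m - 1) := by
  have : Nontrivial (Fin p) := Fin.nontrivial_iff_two_le.mpr hp
  rw [← hcard, ← Set.ncard_coe_finset]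
  exact steinerDist_completelyJoined_general (comap_fst_le_genComp ⊤ Gs)
    range_sigma_fst_nontrivial S
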